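/- Let s ∈ ℂ, t > 0 with t ≥ 2σ‖W‖, and j ∈ [n]. Define the iterates z^{(0)} = z*, z^{(T)} = G(z^{(T−1)}, s, t) for T ∈ ℕ, and z^{(0,−j)} = z*, z^{(T,−j)} = G^{(−j)}(z^{(T−1,−j)}, s, t) for T ∈ ℕ. Then ‖z^{(T)} − z^{(T,−j)}‖ ≤ 3 for every T ∈ ℕ. Consequently, the fixed point z of G(·, s, t) and the fixed point z^{(−j)} of G^{(−j)}(·, s, t) satisfy ‖z − z^{(−j)}‖ ≤ 3. -/

import Mathlib

open scoped Classical
open Matrix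

noncomputable section

namespace PhaseSync

/-- Euclidean norm of a complex vector. -/
def enorm {k : ℕ} (v : Fin k → ℂ) : ℝ := Real.sqrt (∑ i, ‖v i‖ ^ 2)

/-- Frobenius norm of a complex matrix. -/
def fnorm {k l : ℕ} (A : Matrix (Fin k) (Fin l) ℂ) : ℝ :=
  Real.sqrt (∑ i, ∑ j, ‖A i j‖ ^ 2)

/-- L2 operator norm of a square complex matrix. -/
def opNorm {k : ℕ} (A : Matrix (Fin k) (Fin k) ℂ) : ℝ :=
  ‖Matrix.toEuclideanCLM (𝕜 := ℂ) (n := Fin k) A‖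

/-- Indicator function of a proposition. -/
def ind (P : Prop) : ℝ := if P then 1 else 0

/-- The loss ℓ_m(V, z) = min_{a : ‖a‖=1} ‖V - a zᴴ‖_F² / n. -/
def lossM {k l : ℕ} (V : Matrix (Fin k) (Fin l) ℂ) (z : Fin l → ℂ) : ℝ :=
  sInf { r : ℝ | ∃ a : Fin k → ℂ, enorm a = 1 ∧
    r = fnorm (V - Matrix.vecMulVec a (star z)) ^ 2 / l }

/-- The loss ℓ_1(z', z) = min_{|a|=1} ‖z' - a z‖² / n. -/
def loss1 {l : ℕ} (z' z : Fin l → ℂ) : ℝ :=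
  sInf { r : ℝ | ∃ a : ℂ, ‖a‖ = 1 ∧ r = enorm (z' - a • z) ^ 2 / l }

/-- The mapping F₁: entrywise normalization of Y z. -/
def F1 {l : ℕ} (Y : Matrix (Fin l) (Fin l) ℂ) (z : Fin l → ℂ) : Fin l → ℂ :=
  fun j => if Y.mulVec z j ≠ 0 then Y.mulVec z j / (‖Y.mulVec z j‖ : ℂ) else z j

/-- jth column of a matrix. -/
def col {k l : ℕ} (A : Matrix (Fin k) (Fin l) ℂ) (j : Fin l) : Fin k → ℂ := fun i => A i j

/-- The mapping F_m: columnwise normalization of V Yᴴ. -/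
def Fm {k l : ℕ} (Y : Matrix (Fin l) (Fin l) ℂ) (V : Matrix (Fin k) (Fin l) ℂ) :
    Matrix (Fin k) (Fin l) ℂ :=
  Matrix.of fun i j =>
    if col (V * Yᴴ) j ≠ 0 then (V * Yᴴ) i j / ((enorm (col (V * Yᴴ) j) : ℝ) : ℂ) else V i j

/-- g_t(x) = x / max(|x|, t). -/
def gfun (t : ℝ) (x : ℂ) : ℂ := x / ((max ‖x‖ t : ℝ) : ℂ)

/-- The mapping G(z, s, t), coordinatewise g_t(z*_j s + σ [W z]_j). -/
def G {l : ℕ} (zstar : Fin l → ℂ) (σ : ℝ) (W : Matrix (Fin l) (Fin l) ℂ)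
    (z : Fin l → ℂ) (s : ℂ) (t : ℝ) : Fin l → ℂ :=
  fun j => gfun t (zstar j * s + (σ : ℂ) * W.mulVec z j)

/-- The mapping F₁'(z, s), entrywise normalization of z* s + σ W z. -/
def F1' {l : ℕ} (zstar : Fin l → ℂ) (σ : ℝ) (W : Matrix (Fin l) (Fin l) ℂ)
    (z : Fin l → ℂ) (s : ℂ) : Fin l → ℂ :=
  fun j =>
    if zstar j * s + (σ : ℂ) * W.mulVec z j ≠ 0 then
      (zstar j * s + (σ : ℂ) * W.mulVec z j) /
        ((‖zstar j * s + (σ : ℂ) * W.mulVec z j‖ : ℝ) : ℂ)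
    else z j

/-- W with jth row and column zeroed out. -/
def Wminus {l : ℕ} (W : Matrix (Fin l) (Fin l) ℂ) (j : Fin l) : Matrix (Fin l) (Fin l) ℂ :=
  Matrix.of fun k i => if k = j ∨ i = j then 0 else W k i

/-!
The map `g_t` is `t⁻¹` times the metric projection onto the ball of radius `t`, hence
`t⁻¹`-Lipschitz, so `G(·, s, t)` is `1/2`-Lipschitz once `t ≥ 2σ‖W‖`. Away from coordinate `j`,
deleting the `j`th row and column of `W` has the same effect as setting `w j = 0` in the argument
`w`. So if `e` is the distance between two points of the polydisc measured off coordinate `j`,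
one application of `G` and `G^{(-j)}` replaces it by at most `(1 + e) / 2`, the `1` coming from the
`j`th coordinate. The bound `e ≤ 1` is therefore preserved along the iterations and forced at the
fixed points, and coordinate `j` itself adds at most `2`.
-/

section Clip

variable {E : Type*} [NormedAddCommGroup E]

/-- The map `x ↦ x / max ‖x‖ t` on a real normed space, which is `gfun t` when the space is `ℂ`.
For `t > 0` it is `t⁻¹` times the radial retraction onto the closed ball of radius `t`. -/
def clip [NormedSpace ℝ E] (t : ℝ) (x : E) : E := (max ‖x‖ t)⁻¹ • x

lemma norm_clip [NormedSpace ℝ E] (t : ℝ) (x : E) : ‖clip t x‖ = ‖x‖ / max ‖x‖ t := by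
  rw [clip, norm_smul, Real.norm_of_nonneg (inv_nonneg.2 (le_max_of_le_left (norm_nonneg x))),
    inv_mul_eq_div]

lemma norm_clip_le_one [NormedSpace ℝ E] (t : ℝ) (x : E) : ‖clip t x‖ ≤ 1 := by
  rw [norm_clip]
  exact div_le_one_of_le₀ (le_max_left _ _) (le_max_of_le_left (norm_nonneg x))

variable [InnerProductSpace ℝ E] {t : ℝ}

/-- The variational inequality characterizing `t • clip t x` as the metric projection of `x`. -/
lemma inner_sub_smul_clip_nonneg (ht : 0 < t) (x : E) {v : E} (hv : ‖v‖ ≤ 1) :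
    0 ≤ inner ℝ (x - t • clip t x) (clip t x - v) := by
  have hmax : max ‖x‖ t ≠ 0 := (lt_max_of_lt_right ht).ne'
  have hsub : x - t • clip t x = (max ‖x‖ t - t) • clip t x := by
    rw [sub_smul, clip, smul_inv_smul₀ hmax]
  rw [hsub, real_inner_smul_left]
  rcases le_total ‖x‖ t with hxt | htx
  · simp [max_eq_right hxt]
  · have hunit : ‖clip t x‖ = 1 := by
      rw [norm_clip, max_eq_left htx, div_self (ht.trans_le htx).ne']
    have hinner : inner ℝ (clip t x) v ≤ 1 :=
      (real_inner_le_norm _ _).trans (by rwa [hunit, one_mul])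
    refine mul_nonneg (sub_nonneg.2 (le_max_right _ _)) ?_
    rw [inner_sub_right, real_inner_self_eq_norm_sq, hunit]
    linarith

lemma mul_norm_clip_sub_clip_le (ht : 0 < t) (x y : E) :
    t * ‖clip t x - clip t y‖ ≤ ‖x - y‖ := by
  set u := clip t x
  set v := clip t y
  have hx : 0 ≤ inner ℝ (x - t • u) (u - v) :=
    inner_sub_smul_clip_nonneg ht x (norm_clip_le_one t y)
  have hy : 0 ≤ inner ℝ (y - t • v) (v - u) :=
    inner_sub_smul_clip_nonneg ht y (norm_clip_le_one t x)
  have hsum : inner ℝ (x - t • u) (u - v) + inner ℝ (y - t • v) (v - u)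
      = inner ℝ (x - y) (u - v) - t * ‖u - v‖ ^ 2 := by
    rw [← real_inner_self_eq_norm_sq, ← real_inner_smul_left, ← neg_sub u v, inner_neg_right,
      ← sub_eq_add_neg, ← inner_sub_left, ← inner_sub_left, smul_sub]
    congr 1
    abel
  have hmono : t * ‖u - v‖ * ‖u - v‖ ≤ ‖x - y‖ * ‖u - v‖ := by
    linarith [real_inner_le_norm (x - y) (u - v)]
  rcases (norm_nonneg (u - v)).eq_or_lt with hzero | hpos
  · rw [← hzero, mul_zero]
    exact norm_nonneg _
  · exact le_of_mul_le_mul_right hmono hpos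

end Clip

lemma gfun_eq_clip (t : ℝ) (x : ℂ) : gfun t x = clip t x := by
  rw [gfun, clip, Complex.real_smul, Complex.ofReal_inv, inv_mul_eq_div]

section EuclideanNorm

variable {n : ℕ}

lemma enorm_eq_norm_toLp (v : Fin n → ℂ) : enorm v = ‖WithLp.toLp 2 v‖ :=
  (EuclideanSpace.norm_eq (WithLp.toLp 2 v)).symm

lemma enorm_nonneg (v : Fin n → ℂ) : 0 ≤ enorm v := Real.sqrt_nonneg _

lemma enorm_zero : enorm (0 : Fin n → ℂ) = 0 := by
  rw [enorm_eq_norm_toLp, WithLp.toLp_zero, norm_zero]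

lemma enorm_smul (c : ℂ) (v : Fin n → ℂ) : enorm (c • v) = ‖c‖ * enorm v := by
  simp only [enorm_eq_norm_toLp, WithLp.toLp_smul, norm_smul]

lemma enorm_add_le (v w : Fin n → ℂ) : enorm (v + w) ≤ enorm v + enorm w := by
  simpa only [enorm_eq_norm_toLp, WithLp.toLp_add] using norm_add_le _ _

lemma enorm_single (j : Fin n) (c : ℂ) : enorm (Pi.single j c) = ‖c‖ := by
  rw [enorm_eq_norm_toLp]
  exact PiLp.norm_single 2 (fun _ => ℂ) j c

lemma enorm_le_enorm {v w : Fin n → ℂ} (h : ∀ k, ‖v k‖ ≤ ‖w k‖) : enorm v ≤ enorm w :=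
  Real.sqrt_le_sqrt <| Finset.sum_le_sum fun k _ => pow_le_pow_left₀ (norm_nonneg _) (h k) 2

lemma enorm_le_norm_add_enorm_update (v : Fin n → ℂ) (j : Fin n) :
    enorm v ≤ ‖v j‖ + enorm (Function.update v j 0) := by
  have hsplit : v = Pi.single j (v j) + Function.update v j 0 := by
    ext k
    rcases eq_or_ne k j with rfl | hk <;> simp [*]
  have htri := enorm_add_le (Pi.single j (v j)) (Function.update v j 0)
  rwa [← hsplit, enorm_single] at htri

lemma enorm_sub_le_three {z w : Fin n → ℂ} {j : Fin n} (hz : ‖z j‖ ≤ 1) (hw : ‖w j‖ ≤ 1)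
    (hoff : enorm (Function.update (z - w) j 0) ≤ 1) : enorm (z - w) ≤ 3 := by
  have hj : ‖(z - w) j‖ ≤ ‖z j‖ + ‖w j‖ := norm_sub_le _ _
  linarith [enorm_le_norm_add_enorm_update (z - w) j]

lemma enorm_mulVec_le (W : Matrix (Fin n) (Fin n) ℂ) (v : Fin n → ℂ) :
    enorm (W *ᵥ v) ≤ opNorm W * enorm v := by
  simp only [enorm_eq_norm_toLp, opNorm, ← Matrix.toEuclideanCLM_toLp]
  exact ContinuousLinearMap.le_opNorm _ _

end EuclideanNorm

section LeaveOneOut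

variable {n : ℕ} (zstar : Fin n → ℂ) (σ : ℝ) (W : Matrix (Fin n) (Fin n) ℂ) (s : ℂ) {t : ℝ}

lemma norm_G_apply_le_one (t : ℝ) (z : Fin n → ℂ) (k : Fin n) : ‖G zstar σ W z s t k‖ ≤ 1 := by
  rw [G, gfun_eq_clip]
  exact norm_clip_le_one _ _

lemma mul_enorm_G_sub_G_le (ht : 0 < t) (z w : Fin n → ℂ) :
    t * enorm (G zstar σ W z s t - G zstar σ W w s t) ≤ |σ| * opNorm W * enorm (z - w) := by
  have hcoord (k : Fin n) : ‖((t : ℂ) • (G zstar σ W z s t - G zstar σ W w s t)) k‖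
      ≤ ‖((σ : ℂ) • W *ᵥ (z - w)) k‖ := by
    have harg : zstar k * s + σ * (W *ᵥ z) k - (zstar k * s + σ * (W *ᵥ w) k)
        = ((σ : ℂ) • W *ᵥ (z - w)) k := by
      rw [add_sub_add_left_eq_sub, ← mul_sub, mulVec_sub]
      rfl
    rw [← harg, Pi.smul_apply, norm_smul, Complex.norm_of_nonneg ht.le, Pi.sub_apply, G, G,
      gfun_eq_clip, gfun_eq_clip]
    exact mul_norm_clip_sub_clip_le ht _ _
  calc t * enorm (G zstar σ W z s t - G zstar σ W w s t)
      = enorm ((t : ℂ) • (G zstar σ W z s t - G zstar σ W w s t)) := by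
        rw [enorm_smul, Complex.norm_of_nonneg ht.le]
    _ ≤ enorm ((σ : ℂ) • W *ᵥ (z - w)) := enorm_le_enorm hcoord
    _ = |σ| * enorm (W *ᵥ (z - w)) := by rw [enorm_smul, Complex.norm_real, Real.norm_eq_abs]
    _ ≤ |σ| * (opNorm W * enorm (z - w)) :=
        mul_le_mul_of_nonneg_left (enorm_mulVec_le W _) (abs_nonneg σ)
    _ = |σ| * opNorm W * enorm (z - w) := (mul_assoc _ _ _).symm

variable {σ W} in
lemma two_mul_enorm_G_sub_G_le (ht : 0 < t) (hσW : 2 * |σ| * opNorm W ≤ t) (z w : Fin n → ℂ) :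
    2 * enorm (G zstar σ W z s t - G zstar σ W w s t) ≤ enorm (z - w) := by
  refine le_of_mul_le_mul_left ?_ ht
  calc t * (2 * enorm (G zstar σ W z s t - G zstar σ W w s t))
      = 2 * (t * enorm (G zstar σ W z s t - G zstar σ W w s t)) := by ring
    _ ≤ 2 * (|σ| * opNorm W * enorm (z - w)) :=
        mul_le_mul_of_nonneg_left (mul_enorm_G_sub_G_le zstar σ W s ht z w) zero_le_two
    _ = 2 * |σ| * opNorm W * enorm (z - w) := by ring
    _ ≤ t * enorm (z - w) := mul_le_mul_of_nonneg_right hσW (enorm_nonneg _)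

lemma Wminus_mulVec_apply_of_ne {j k : Fin n} (hk : k ≠ j) (w : Fin n → ℂ) :
    (Wminus W j *ᵥ w) k = (W *ᵥ Function.update w j 0) k := by
  simp only [mulVec, dotProduct]
  refine Finset.sum_congr rfl fun i _ => ?_
  rcases eq_or_ne i j with rfl | hi <;> simp [Wminus, *]

lemma G_Wminus_apply_of_ne (t : ℝ) {j k : Fin n} (hk : k ≠ j) (w : Fin n → ℂ) :
    G zstar σ (Wminus W j) w s t k = G zstar σ W (Function.update w j 0) s t k := by
  rw [G, G, Wminus_mulVec_apply_of_ne W hk]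

variable {σ W} in
lemma two_mul_enorm_update_G_sub_G_Wminus_le (ht : 0 < t) (hσW : 2 * |σ| * opNorm W ≤ t)
    {j : Fin n} {z : Fin n → ℂ} (hz : ‖z j‖ ≤ 1) (w : Fin n → ℂ) :
    2 * enorm (Function.update (G zstar σ W z s t - G zstar σ (Wminus W j) w s t) j 0)
      ≤ 1 + enorm (Function.update (z - w) j 0) := by
  set w₀ := Function.update w j 0 with hw₀
  have hdelete : enorm (Function.update (G zstar σ W z s t - G zstar σ (Wminus W j) w s t) j 0)
      ≤ enorm (G zstar σ W z s t - G zstar σ W w₀ s t) := by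
    refine enorm_le_enorm fun k => ?_
    rcases eq_or_ne k j with rfl | hk
    · simp
    · rw [Function.update_of_ne hk, Pi.sub_apply, Pi.sub_apply, G_Wminus_apply_of_ne _ _ _ _ _ hk]
  have hoff : Function.update (z - w₀) j 0 = Function.update (z - w) j 0 := by
    ext k
    rcases eq_or_ne k j with rfl | hk <;> simp [*]
  have hj : (z - w₀) j = z j := by simp [hw₀]
  calc 2 * enorm (Function.update (G zstar σ W z s t - G zstar σ (Wminus W j) w s t) j 0)
      ≤ 2 * enorm (G zstar σ W z s t - G zstar σ W w₀ s t) := by gcongr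
    _ ≤ enorm (z - w₀) := two_mul_enorm_G_sub_G_le zstar s ht hσW z w₀
    _ ≤ ‖(z - w₀) j‖ + enorm (Function.update (z - w₀) j 0) := enorm_le_norm_add_enorm_update _ _
    _ ≤ 1 + enorm (Function.update (z - w) j 0) := by rw [hj, hoff]; gcongr

end LeaveOneOut

theorem stmt19_general {n : ℕ} (zstar zinit : Fin n → ℂ) (σ : ℝ)
    (W : Matrix (Fin n) (Fin n) ℂ) (s : ℂ) (t : ℝ) (ht : 0 < t)
    (hσW : 2 * |σ| * opNorm W ≤ t) (j : Fin n) (hinit : ‖zinit j‖ ≤ 1)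
    (zseq zseqj : ℕ → Fin n → ℂ)
    (hz0 : zseq 0 = zinit) (hzT : ∀ T : ℕ, zseq (T + 1) = G zstar σ W (zseq T) s t)
    (hzj0 : zseqj 0 = zinit)
    (hzjT : ∀ T : ℕ, zseqj (T + 1) = G zstar σ (Wminus W j) (zseqj T) s t)
    (z zmj : Fin n → ℂ)
    (hz : z = G zstar σ W z s t) (hzmj : zmj = G zstar σ (Wminus W j) zmj s t) :
    (∀ T : ℕ, enorm (zseq T - zseqj T) ≤ 3) ∧ enorm (z - zmj) ≤ 3 := by
  constructor
  · have hseq (T : ℕ) : ‖zseq T j‖ ≤ 1 := by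
      cases T with
      | zero => rwa [hz0]
      | succ T => exact hzT T ▸ norm_G_apply_le_one ..
    have hseqj (T : ℕ) : ‖zseqj T j‖ ≤ 1 := by
      cases T with
      | zero => rwa [hzj0]
      | succ T => exact hzjT T ▸ norm_G_apply_le_one ..
    refine fun T => enorm_sub_le_three (hseq T) (hseqj T) ?_
    induction T with
    | zero => simp [hz0, hzj0, enorm_zero]
    | succ T ih =>
      rw [hzT, hzjT]
      linarith [two_mul_enorm_update_G_sub_G_Wminus_le zstar s ht hσW (hseq T) (zseqj T)]
  · have hzj : ‖z j‖ ≤ 1 := hz ▸ norm_G_apply_le_one ..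
    have hzmjj : ‖zmj j‖ ≤ 1 := hzmj ▸ norm_G_apply_le_one ..
    have hstep := two_mul_enorm_update_G_sub_G_Wminus_le zstar s ht hσW hzj zmj
    rw [← hz, ← hzmj] at hstep
    exact enorm_sub_le_three hzj hzmjj (by linarith)

theorem stmt19 {n : ℕ} (hn : 1 ≤ n)
    (zstar : Fin n → ℂ) (hzstar : ∀ j, ‖zstar j‖ = 1)
    (σ : ℝ) (hσ : 0 < σ) (W : Matrix (Fin n) (Fin n) ℂ) (hW : W.IsHermitian)
    (s : ℂ) (t : ℝ) (ht : 0 < t) (ht2 : 2 * σ * opNorm W ≤ t) (j : Fin n)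
    (zseq zseqj : ℕ → Fin n → ℂ)
    (hz0 : zseq 0 = zstar) (hzT : ∀ T : ℕ, zseq (T + 1) = G zstar σ W (zseq T) s t)
    (hzj0 : zseqj 0 = zstar)
    (hzjT : ∀ T : ℕ, zseqj (T + 1) = G zstar σ (Wminus W j) (zseqj T) s t)
    (z zmj : Fin n → ℂ)
    (hz : (∀ i, ‖z i‖ ≤ 1) ∧ z = G zstar σ W z s t)
    (hzmj : (∀ i, ‖zmj i‖ ≤ 1) ∧ zmj = G zstar σ (Wminus W j) zmj s t) :
    (∀ T : ℕ, enorm (zseq T - zseqj T) ≤ 3) ∧ enorm (z - zmj) ≤ 3 := by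
  exact stmt19_general zstar zstar σ W s t ht (by rwa [abs_of_pos hσ]) j (hzstar j).le
    zseq zseqj hz0 hzT hzj0 hzjT z zmj hz.2 hzmj.2

end PhaseSync
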